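/- arXiv:2406.08465 — 2 statements merged into one kernel-verified Lean document; each statement's English description precedes it below -/
import Mathlib

section
/- Projection three-point inequality: let x ∈ M, v ∈ T_xM, η > 0 with x − ηv ∈ Ū_M(γ), and x⁺ := P_M(x − ηv). Then for every z ∈ M: ⟨v, z − x⁺⟩ ≥ (1/(2η))(‖x⁺ − x‖² − ‖z − x‖²) + (1/(2η) − 3‖v‖/(4γ))·‖z − x⁺‖². -/
open Metric
open scoped RealInnerProductSpace

noncomputable section

/-- `ℝ^{d×k}` with the Frobenius inner product and norm. -/
abbrev Mat (d k : ℕ) : Type := EuclideanSpace ℝ (Fin d × Fin k)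

/-- `p` is a nearest point to `x` on `M`, i.e. a projection point `p ∈ P_M(x)`. -/
def IsNearestPt {d k : ℕ} (M : Set (Mat d k)) (x p : Mat d k) : Prop :=
  p ∈ M ∧ ∀ u ∈ M, ‖x - p‖ ≤ ‖x - u‖

/-- `v` is a tangent vector of `M` at `x`: the derivative at `0` of a curve in `M` through `x`. -/
def IsTangentAt {d k : ℕ} (M : Set (Mat d k)) (x v : Mat d k) : Prop :=
  ∃ c : ℝ → Mat d k, (∀ s : ℝ, c s ∈ M) ∧ c 0 = x ∧ HasDerivAt c v 0

open Filter Topology in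
lemma aux_cont {d k : ℕ} (M : Set (Mat d k)) (hMcpt : IsCompact M) (γ : ℝ)
    (P : Mat d k → Mat d k) (hP : ∀ y, IsNearestPt M y (P y))
    (hprox : ∀ y : Mat d k, infDist y M < 2 * γ → ∀ p, IsNearestPt M y p → p = P y)
    (y : Mat d k) (hy : infDist y M < 2 * γ) : Tendsto P (𝓝 y) (𝓝 (P y)) := by
  refine hMcpt.tendsto_nhds_of_unique_mapClusterPt (Eventually.of_forall fun z => (hP z).1) ?_
  intro p hp hcl
  refine hprox y hy p ⟨hp, fun u hu => ?_⟩
  refine le_of_forall_pos_le_add fun e he => ?_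
  have h1 := hcl.frequently (Metric.ball_mem_nhds p (by positivity : 0 < e / 4))
  have h2 : ∀ᶠ z in 𝓝 y, z ∈ Metric.ball y (e / 4) := Metric.ball_mem_nhds y (by positivity)
  obtain ⟨z, hz1, hz2⟩ := (h1.and_eventually h2).exists
  rw [Metric.mem_ball] at hz2
  rw [dist_eq_norm] at hz1 hz2
  have h3 := (hP z).2 u hu
  have e1 : y - p = (z - P z) + (P z - p) - (z - y) := by abel
  have e2 : z - u = (z - y) + (y - u) := by abel
  have n1 : ‖y - p‖ ≤ ‖z - P z‖ + ‖P z - p‖ + ‖z - y‖ := by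
    rw [e1]; exact (norm_sub_le _ _).trans (by gcongr; exact norm_add_le _ _)
  have n2 : ‖z - u‖ ≤ ‖z - y‖ + ‖y - u‖ := by rw [e2]; exact norm_add_le _ _
  linarith

lemma aux_infDist {d k : ℕ} (M : Set (Mat d k)) (y p : Mat d k) (h : IsNearestPt M y p) :
    infDist y M = ‖y - p‖ := by
  apply le_antisymm
  · rw [← dist_eq_norm]; exact infDist_le_dist_of_mem h.1
  · exact (le_infDist ⟨p, h.1⟩).2 fun {u} hu => by rw [dist_eq_norm]; exact h.2 u hu

open Filter Topology in
/-- One step of the extension along a normal ray. -/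
lemma aux_step {d k : ℕ} (M : Set (Mat d k)) (hMcpt : IsCompact M) (γ : ℝ)
    (P : Mat d k → Mat d k) (hP : ∀ y, IsNearestPt M y (P y))
    (hprox : ∀ y : Mat d k, infDist y M < 2 * γ → ∀ p, IsNearestPt M y p → p = P y)
    (q p : Mat d k) (hq : IsNearestPt M q p) (ε : ℝ) (hε : 0 < ε)
    (h1 : ε < ‖q - p‖) (h2 : ‖q - p‖ + ε < 2 * γ) :
    ∃ a : ℝ, 1 < a ∧ (a - 1) * ‖q - p‖ ≤ ε ∧ IsNearestPt M (p + a • (q - p)) p := by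
  obtain ⟨y, hyB, hymax⟩ := (isCompact_closedBall q ε).exists_isMaxOn
    ⟨q, mem_closedBall_self hε.le⟩ (continuous_infDist_pt M).continuousOn
  have hyn : ‖y - q‖ ≤ ε := by rw [← dist_eq_norm]; exact hyB
  have hdq := aux_infDist M q p hq
  have hdy := aux_infDist M y (P y) (hP y)
  have hge : ‖q - p‖ ≤ ‖y - P y‖ := by
    rw [← hdq, ← hdy]; exact hymax (mem_closedBall_self hε.le)
  have hlt : infDist y M < 2 * γ := by
    have := infDist_le_infDist_add_dist (s := M) (x := y) (y := q)
    rw [dist_eq_norm] at this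
    linarith
  set n := y - P y with hn
  have hnpos : 0 < ‖n‖ := by linarith
  have hvar : ∀ u ∈ closedBall q ε, ⟪u - y, n⟫ ≤ 0 := by
    intro u hu
    have hc : Tendsto (fun s : ℝ => ⟪u - y, y - P (y + s • (u - y))⟫) (𝓝[>] 0)
        (𝓝 ⟪u - y, y - P y⟫) := by
      have ht : Tendsto (fun s : ℝ => y + s • (u - y)) (𝓝[>] 0) (𝓝 y) := by
        have : Continuous (fun s : ℝ => y + s • (u - y)) := by fun_prop
        have := this.tendsto 0
        simp only [zero_smul, add_zero] at this
        exact this.mono_left nhdsWithin_le_nhds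
      have := (aux_cont M hMcpt γ P hP hprox y hlt).comp ht
      exact tendsto_const_nhds.inner (tendsto_const_nhds.sub this)
    refine le_of_tendsto hc ?_
    filter_upwards [Ioo_mem_nhdsGT (zero_lt_one' ℝ)] with s hs
    have hmem : y + s • (u - y) ∈ closedBall q ε :=
      (convex_closedBall q ε).add_smul_sub_mem hyB hu ⟨hs.1.le, hs.2.le⟩
    have hm : infDist (y + s • (u - y)) M ≤ infDist y M := hymax hmem
    set z := y + s • (u - y) with hz
    rw [aux_infDist M z (P z) (hP z), hdy] at hm
    have hle := (hP y).2 (P z) (hP z).1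
    have e1 : z - P z = (y - P z) + s • (u - y) := by rw [hz]; abel
    have hsq : ‖z - P z‖ ^ 2 = ‖y - P z‖ ^ 2 + 2 * (s * ⟪u - y, y - P z⟫)
        + ‖s • (u - y)‖ ^ 2 := by
      rw [e1, norm_add_sq_real, inner_smul_right, real_inner_comm]
    have h3 : ‖z - P z‖ ^ 2 ≤ ‖y - P z‖ ^ 2 :=
      pow_le_pow_left₀ (norm_nonneg _) (hm.trans hle) 2
    have h4 : s * ⟪u - y, y - P z⟫ ≤ 0 := by nlinarith [sq_nonneg ‖s • (u - y)‖]
    by_contra hcon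
    push Not at hcon
    have := mul_pos hs.1 hcon
    linarith
  -- y - q = (ε/‖n‖) n
  set b := ε / ‖n‖ with hb
  have hbn : b * ‖n‖ = ε := by rw [hb]; field_simp
  have hbpos : 0 < b := by positivity
  have hb1 : b < 1 := by rw [hb, div_lt_one hnpos]; linarith
  have hu : q + b • n ∈ closedBall q ε := by
    rw [mem_closedBall, dist_eq_norm, add_sub_cancel_left, norm_smul, Real.norm_of_nonneg hbpos.le,
      hbn]
  have hyq : y - q = b • n := by
    have h3 := hvar _ hu
    have e1 : q + b • n - y = b • n - (y - q) := by abel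
    rw [e1, inner_sub_left, inner_smul_left, real_inner_self_eq_norm_sq] at h3
    simp only [conj_trivial] at h3
    have h4 : ‖(y - q) - b • n‖ ^ 2 = ‖y - q‖ ^ 2 - 2 * (b * ⟪y - q, n⟫) + (b * ‖n‖) ^ 2 := by
      rw [norm_sub_sq_real, inner_smul_right, norm_smul, Real.norm_of_nonneg hbpos.le]
    have h5 : ‖y - q‖ ^ 2 ≤ ε ^ 2 := pow_le_pow_left₀ (norm_nonneg _) hyn 2
    have h6 : b * (b * ‖n‖ ^ 2) ≤ b * ⟪y - q, n⟫ := by gcongr; linarith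
    have h7 : b * (b * ‖n‖ ^ 2) = ε ^ 2 := by rw [← hbn]; ring
    have h8 : ‖(y - q) - b • n‖ ^ 2 ≤ 0 := by rw [h4, hbn]; linarith
    have h9 : ‖(y - q) - b • n‖ = 0 := by
      have := le_antisymm h8 (sq_nonneg _)
      exact pow_eq_zero_iff (two_ne_zero) |>.1 this
    exact sub_eq_zero.1 (norm_eq_zero.1 h9)
  have hqP : q - P y = (1 - b) • n := by
    rw [sub_smul, one_smul, ← hyq, hn]; abel
  have hnear : IsNearestPt M q (P y) := by
    refine ⟨(hP y).1, fun u hu => ?_⟩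
    have h3 := (hP y).2 u hu
    have e1 : y - u = (y - q) + (q - u) := by abel
    have h4 : ‖y - u‖ ≤ ‖y - q‖ + ‖q - u‖ := by rw [e1]; exact norm_add_le _ _
    rw [hqP, norm_smul, Real.norm_of_nonneg (by linarith)]
    change ‖n‖ ≤ _ at h3
    nlinarith
  have hqt : infDist q M < 2 * γ := by linarith
  have hpp : P y = p := (hprox q hqt _ hnear).trans (hprox q hqt _ hq).symm
  have hb1' : (1 - b) ≠ 0 := by linarith
  have hqp : q - p = (1 - b) • n := by rw [← hpp, hqP]
  have hnormqp : ‖q - p‖ = (1 - b) * ‖n‖ := by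
    rw [hqp, norm_smul, Real.norm_of_nonneg (by linarith)]
  refine ⟨(1 - b)⁻¹, ?_, ?_, ?_⟩
  · exact (one_lt_inv₀ (by linarith)).2 (by linarith)
  · rw [hnormqp, ← hbn]
    apply le_of_eq
    field_simp
    ring
  · rw [hqp, smul_smul, inv_mul_cancel₀ hb1', one_smul, ← hpp, hn, add_sub_cancel]
    exact hP y

lemma aux_ray {d k : ℕ} (M : Set (Mat d k)) (hMcpt : IsCompact M) (γ : ℝ) (hγ : 0 < γ)
    (P : Mat d k → Mat d k) (hP : ∀ y, IsNearestPt M y (P y))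
    (hprox : ∀ y : Mat d k, infDist y M < 2 * γ → ∀ p, IsNearestPt M y p → p = P y)
    (p w : Mat d k) (hq : IsNearestPt M (p + w) p) (hw : 0 < ‖w‖) (hwγ : ‖w‖ ≤ γ) :
    IsNearestPt M (p + (γ / ‖w‖) • w) p := by
  set T := γ / ‖w‖ with hT
  have hT1 : 1 ≤ T := by rw [hT, le_div_iff₀ hw]; linarith
  have hTw : T * ‖w‖ = γ := by rw [hT]; field_simp
  let S : Set ℝ := Set.Icc 1 T ∩ {t | ∀ u ∈ M, ‖(p + t • w) - p‖ ≤ ‖(p + t • w) - u‖}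
  have hS : IsCompact S := by
    refine isCompact_Icc.inter_right ?_
    simp only [Set.ofPred_forall]
    refine isClosed_iInter fun u => isClosed_iInter fun _ => ?_
    exact isClosed_le (by fun_prop) (by fun_prop)
  obtain ⟨t, ⟨ht, htn⟩, htmax⟩ := hS.exists_isMaxOn
    ⟨1, ⟨le_refl _, hT1⟩, fun u hu => by rw [one_smul]; exact hq.2 u hu⟩ continuousOn_id
  have htn' : IsNearestPt M (p + t • w) p := ⟨hq.1, htn⟩
  rcases eq_or_lt_of_le ht.2 with h | h
  · rw [← h]; exact htn'
  exfalso
  have ht0 : 0 < t := by linarith [ht.1]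
  have hnorm : ‖p + t • w - p‖ = t * ‖w‖ := by
    rw [add_sub_cancel_left, norm_smul, Real.norm_of_nonneg ht0.le]
  have htw : 0 < t * ‖w‖ := by positivity
  have hd : 0 < (T - t) * ‖w‖ := mul_pos (by linarith) hw
  obtain ⟨a, ha1, ha2, ha3⟩ := aux_step M hMcpt γ P hP hprox (p + t • w) p htn'
    (min (t * ‖w‖ / 2) ((T - t) * ‖w‖)) (lt_min (by positivity) hd)
    (by rw [hnorm]; exact (min_le_left _ _).trans_lt (by linarith))
    (by
      rw [hnorm]
      have := min_le_right (t * ‖w‖ / 2) ((T - t) * ‖w‖)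
      nlinarith)
  rw [hnorm] at ha2
  rw [add_sub_cancel_left, smul_smul] at ha3
  have h5 : (a - 1) * (t * ‖w‖) ≤ (T - t) * ‖w‖ := ha2.trans (min_le_right _ _)
  have h6 : (a - 1) * t ≤ T - t := by
    refine le_of_mul_le_mul_right ?_ hw
    linarith
  have h7 : t < a * t := by nlinarith
  have h8 : a * t ≤ t := htmax (show a * t ∈ S from ⟨⟨by linarith [ht.1], by linarith⟩, ha3.2⟩)
  linarith

lemma aux_normal {d k : ℕ} (M : Set (Mat d k)) (hMcpt : IsCompact M) (γ : ℝ) (hγ : 0 < γ)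
    (P : Mat d k → Mat d k) (hP : ∀ y, IsNearestPt M y (P y))
    (hprox : ∀ y : Mat d k, infDist y M < 2 * γ → ∀ p, IsNearestPt M y p → p = P y)
    (p w : Mat d k) (hq : IsNearestPt M (p + w) p) (hwγ : ‖w‖ ≤ γ) (z : Mat d k) (hz : z ∈ M) :
    ⟪w, z - p⟫ ≤ ‖w‖ / (2 * γ) * ‖z - p‖ ^ 2 := by
  rcases eq_or_lt_of_le (norm_nonneg w) with h0 | hw
  · rw [norm_eq_zero.1 h0.symm]; simp
  have h := (aux_ray M hMcpt γ hγ P hP hprox p w hq hw hwγ).2 z hz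
  have e1 : p + (γ / ‖w‖) • w - z = (γ / ‖w‖) • w - (z - p) := by abel
  rw [e1, add_sub_cancel_left] at h
  have h2 := pow_le_pow_left₀ (norm_nonneg _) h 2
  rw [norm_sub_sq_real, inner_smul_left] at h2
  simp only [conj_trivial] at h2
  have h3 : 2 * (γ / ‖w‖ * ⟪w, z - p⟫) ≤ ‖z - p‖ ^ 2 := by linarith
  have h4 : ⟪w, z - p⟫ = ‖w‖ / (2 * γ) * (2 * (γ / ‖w‖ * ⟪w, z - p⟫)) := by
    field_simp
  rw [h4]
  gcongr

/-- Projection three-point inequality: let `x ∈ M`, `v ∈ T_x M`, `η > 0` with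
`x - ηv ∈ Ū_M(γ)`, and `x⁺ := P_M(x - ηv)`. Then for every `z ∈ M`,
`⟪v, z - x⁺⟫ ≥ (1/(2η)) (‖x⁺ - x‖² - ‖z - x‖²) + (1/(2η) - 3‖v‖/(4γ)) ‖z - x⁺‖²`. -/
theorem projection_three_point_inequality
    {d k : ℕ} (M : Set (Mat d k)) (hMne : M.Nonempty) (hMcpt : IsCompact M)
    (γ : ℝ) (hγ : 0 < γ)
    (P : Mat d k → Mat d k) (hP : ∀ y, IsNearestPt M y (P y))
    (hprox : ∀ y : Mat d k, infDist y M < 2 * γ → ∀ p, IsNearestPt M y p → p = P y)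
    (x v : Mat d k) (hx : x ∈ M) (hv : IsTangentAt M x v)
    (η : ℝ) (hη : 0 < η) (htube : infDist (x - η • v) M ≤ γ)
    (xplus : Mat d k) (hxplus : xplus = P (x - η • v)) :
    ∀ z ∈ M, ⟪v, z - xplus⟫ ≥
      1 / (2 * η) * (‖xplus - x‖ ^ 2 - ‖z - x‖ ^ 2)
        + (1 / (2 * η) - 3 * ‖v‖ / (4 * γ)) * ‖z - xplus‖ ^ 2 := by
  intro z hz
  have hnear : IsNearestPt M (x - η • v) xplus := hxplus ▸ hP _
  have hd := aux_infDist M _ _ hnear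
  set w := x - η • v - xplus with hw
  have hwγ : ‖w‖ ≤ γ := by rw [← hd]; exact htube
  have hwv : ‖w‖ ≤ η * ‖v‖ := by
    have := hnear.2 x hx
    rwa [sub_sub_cancel_left, norm_neg, norm_smul, Real.norm_of_nonneg hη.le] at this
  have hn := aux_normal M hMcpt γ hγ P hP hprox xplus w
    (by rw [hw, add_sub_cancel]; exact hnear) hwγ z hz
  have hn2 : ⟪w, z - xplus⟫ ≤ 3 * (η * ‖v‖) / (4 * γ) * ‖z - xplus‖ ^ 2 := by
    refine hn.trans ?_
    gcongr ?_ * _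
    rw [div_le_div_iff₀ (by positivity) (by positivity)]
    nlinarith [mul_le_mul_of_nonneg_right hwv hγ.le,
      mul_nonneg (mul_nonneg hη.le (norm_nonneg v)) hγ.le]
  have e1 : η • v = (x - xplus) - w := by rw [hw]; abel
  have h1 : η * ⟪v, z - xplus⟫ = ⟪x - xplus, z - xplus⟫ - ⟪w, z - xplus⟫ := by
    rw [← inner_sub_left, ← e1, inner_smul_left]; simp
  have h2 : ‖z - x‖ ^ 2 = ‖x - xplus‖ ^ 2 - 2 * ⟪x - xplus, z - xplus⟫ + ‖z - xplus‖ ^ 2 := by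
    rw [← norm_sub_sq_real, norm_sub_rev z x]
    congr 2; abel
  rw [norm_sub_rev xplus x, ge_iff_le]
  refine le_of_mul_le_mul_left ?_ hη
  rw [h1]
  have h3 : η * (1 / (2 * η) * (‖x - xplus‖ ^ 2 - ‖z - x‖ ^ 2)
        + (1 / (2 * η) - 3 * ‖v‖ / (4 * γ)) * ‖z - xplus‖ ^ 2)
      = (‖x - xplus‖ ^ 2 - ‖z - x‖ ^ 2 + ‖z - xplus‖ ^ 2) / 2
        - 3 * (η * ‖v‖) / (4 * γ) * ‖z - xplus‖ ^ 2 := by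
    field_simp
    ring
  rw [h3]
  linarith
end
end

section
/- If M is 2γ-proximally smooth, then the projection operator P_M is 2-Lipschitz continuous on the closed γ-tube: ‖P_M(x) − P_M(y)‖ ≤ 2‖x − y‖ for all x, y ∈ Ū_M(γ). -/
open Metric

noncomputable section

theorem nearest_infDist {d k : ℕ} {M : Set (Mat d k)} {x p : Mat d k}
    (h : IsNearestPt M x p) : infDist x M = ‖x - p‖ := by
  apply le_antisymm
  · rw [← dist_eq_norm]; exact infDist_le_dist_of_mem h.1
  · rw [le_infDist ⟨p, h.1⟩]
    intro u hu
    rw [dist_eq_norm]; exact h.2 u hu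

theorem proj_tendsto {d k : ℕ} {M : Set (Mat d k)} (hMcpt : IsCompact M)
    {P : Mat d k → Mat d k} (hP : ∀ x, IsNearestPt M x (P x)) (z : Mat d k)
    (hz : ∀ p, IsNearestPt M z p → p = P z) :
    Filter.Tendsto P (nhds z) (nhds (P z)) := by
  refine hMcpt.tendsto_nhds_of_unique_mapClusterPt
    (Filter.Eventually.of_forall fun x => (hP x).1) ?_
  intro q hq hcl
  apply hz
  refine ⟨hq, fun u hu => ?_⟩
  apply le_of_forall_pos_le_add
  intro ε hε
  have hfr := hcl.frequently (ball_mem_nhds q (show 0 < ε / 3 by positivity))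
  obtain ⟨z', h1, h2⟩ := (hfr.and_eventually
    (ball_mem_nhds z (show 0 < ε / 3 by positivity))).exists
  have h1' : dist (P z') q < ε / 3 := h1
  have h2' : dist z' z < ε / 3 := h2
  have h3 := (hP z').2 u hu
  rw [← dist_eq_norm, ← dist_eq_norm] at *
  have a1 := dist_triangle4 z z' (P z') q
  have a2 := dist_triangle z' z u
  rw [dist_comm z z'] at a1
  linarith

theorem step_lemma {d k : ℕ} {M : Set (Mat d k)} (hMcpt : IsCompact M)
    {P : Mat d k → Mat d k} (hP : ∀ x, IsNearestPt M x (P x)) (z : Mat d k)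
    (hz : ∀ p, IsNearestPt M z p → p = P z) (hpos : 0 < ‖z - P z‖)
    (c : ℝ) (hc : c < 1) (η : ℝ) (hη : 0 < η) :
    ∃ z' : Mat d k, 0 < ‖z' - z‖ ∧ ‖z' - z‖ < η ∧
      infDist z M + c * ‖z' - z‖ < infDist z' M := by
  set u : Mat d k := (‖z - P z‖)⁻¹ • (z - P z) with hu
  have hun : ‖u‖ = 1 := by
    rw [hu, norm_smul, norm_inv, norm_norm, inv_mul_cancel₀ hpos.ne']
  have hcont : Filter.Tendsto (fun q : Mat d k => inner ℝ u (z - q) - c * ‖z - q‖)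
      (nhds (P z)) (nhds (inner ℝ u (z - P z) - c * ‖z - P z‖)) := by
    apply Continuous.tendsto
      (f := fun q : Mat d k => inner ℝ u (z - q) - c * ‖z - q‖)
    fun_prop
  have hin : inner ℝ u (z - P z) = ‖z - P z‖ := by
    rw [hu, real_inner_smul_left, real_inner_self_eq_norm_sq]
    field_simp
  have hp0 : 0 < inner ℝ u (z - P z) - c * ‖z - P z‖ := by
    rw [hin]; nlinarith
  have hev := (hcont.comp (proj_tendsto hMcpt hP z hz)).eventually (lt_mem_nhds hp0)
  obtain ⟨ρ, hρ, hball⟩ := Metric.eventually_nhds_iff.1 hev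
  obtain ⟨h, hh0, hh⟩ := exists_between (lt_min hρ hη)
  have hhρ := lt_of_lt_of_le hh (min_le_left _ _)
  have hhη := lt_of_lt_of_le hh (min_le_right _ _)
  have hd : ‖z + h • u - z‖ = h := by
    rw [add_sub_cancel_left, norm_smul, hun, mul_one, Real.norm_of_nonneg hh0.le]
  refine ⟨z + h • u, by rw [hd]; exact hh0, by rw [hd]; exact hhη, ?_⟩
  rw [hd]
  have hb := hball (y := z + h • u) (by rw [dist_eq_norm, hd]; exact hhρ)
  simp only [Function.comp] at hb
  set q := P (z + h • u) with hq
  rw [nearest_infDist (hP z), nearest_infDist (hP (z + h • u)), ← hq]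
  have hle : ‖z - P z‖ ≤ ‖z - q‖ := (hP z).2 q (hP _).1
  have hqpos : 0 < ‖z - q‖ := lt_of_lt_of_le hpos hle
  have hcs := real_inner_le_norm (z + h • u - q) (z - q)
  have e : z + h • u - q = (z - q) + h • u := by abel
  rw [e, inner_add_left, real_inner_smul_left, real_inner_self_eq_norm_sq] at hcs
  rw [e]
  have : (‖z - q‖ + c * h) * ‖z - q‖ < ‖z - q + h • u‖ * ‖z - q‖ := by nlinarith
  have := lt_of_mul_lt_mul_right this hqpos.le
  linarith

theorem extend_lemma {d k : ℕ} {M : Set (Mat d k)} (hMcpt : IsCompact M)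
    {r : ℝ} {P : Mat d k → Mat d k} (hP : ∀ x, IsNearestPt M x (P x))
    (hprox : ∀ x : Mat d k, infDist x M < r → ∀ p, IsNearestPt M x p → p = P x)
    (x : Mat d k) (hpos : 0 < infDist x M) (T : ℝ) (hT : 0 ≤ T)
    (hr : infDist x M + T < r) :
    ∃ z, ‖z - x‖ ≤ T ∧ infDist x M + T ≤ infDist z M := by
  have hK := isCompact_closedBall x T
  have hKne : (closedBall x T).Nonempty := nonempty_closedBall.2 hT
  obtain ⟨w, hw, hwmax⟩ := hK.exists_isMaxOn hKne (continuous_infDist_pt M).continuousOn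
  refine ⟨w, by simpa [dist_eq_norm] using hw, ?_⟩
  have key : ∀ c : ℝ, 0 ≤ c → c < 1 → infDist x M + c * T ≤ infDist w M := by
    intro c hc0 hc
    have hcont : Continuous fun z : Mat d k => infDist z M - c * ‖z - x‖ :=
      (continuous_infDist_pt M).sub (by fun_prop)
    obtain ⟨z, hz, hzmax⟩ := hK.exists_isMaxOn hKne hcont.continuousOn
    have hzT : ‖z - x‖ ≤ T := by simpa [dist_eq_norm] using hz
    have h0 : infDist x M - c * ‖x - x‖ ≤ infDist z M - c * ‖z - x‖ :=
      hzmax (mem_closedBall_self hT)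
    rw [sub_self, norm_zero, mul_zero, sub_zero] at h0
    have hwz : infDist z M ≤ infDist w M := hwmax hz
    rcases hzT.lt_or_eq with hlt | heq
    · exfalso
      have hzpos : 0 < infDist z M := by
        have := mul_nonneg hc0 (norm_nonneg (z - x))
        linarith
      have hzr : infDist z M < r := by
        have := infDist_le_infDist_add_dist (s := M) (x := z) (y := x)
        rw [dist_eq_norm] at this
        linarith
      obtain ⟨z', h1, h2, h3⟩ := step_lemma hMcpt hP z (hprox z hzr)
        (by rw [← nearest_infDist (hP z)]; exact hzpos) c hc (T - ‖z - x‖) (by linarith)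
      have htri : ‖z' - x‖ ≤ ‖z' - z‖ + ‖z - x‖ := norm_sub_le_norm_sub_add_norm_sub _ _ _
      have hmem : z' ∈ closedBall x T := by
        rw [mem_closedBall, dist_eq_norm]; linarith
      have h4 : infDist z' M - c * ‖z' - x‖ ≤ infDist z M - c * ‖z - x‖ := hzmax hmem
      nlinarith [mul_le_mul_of_nonneg_left htri hc0]
    · rw [heq] at h0; linarith
  by_contra hcon
  push Not at hcon
  have hlim : Filter.Tendsto (fun c : ℝ => infDist x M + c * T) (nhdsWithin 1 (Set.Iio 1))
      (nhds (infDist x M + 1 * T)) := by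
    apply Filter.Tendsto.mono_left _ nhdsWithin_le_nhds
    apply Continuous.tendsto (f := fun c : ℝ => infDist x M + c * T)
    fun_prop
  have := le_of_tendsto hlim (b := infDist w M) (by
    filter_upwards [Ioo_mem_nhdsLT (show (0:ℝ) < 1 by norm_num)] with c hc
    exact key c hc.1.le hc.2)
  linarith

theorem normal_ineq {d k : ℕ} {M : Set (Mat d k)} (hMcpt : IsCompact M)
    {γ : ℝ} (hγ : 0 < γ) {P : Mat d k → Mat d k} (hP : ∀ x, IsNearestPt M x (P x))
    (hprox : ∀ x : Mat d k, infDist x M < 2 * γ → ∀ p, IsNearestPt M x p → p = P x)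
    (x : Mat d k) (hx : infDist x M ≤ γ) (q : Mat d k) (hq : q ∈ M) :
    4 * inner ℝ (x - P x) (q - P x) ≤ ‖q - P x‖ ^ 2 := by
  have hδ := nearest_infDist (hP x)
  rcases (infDist_nonneg (x := x) (s := M)).eq_or_lt with h0 | hpos
  · have : x - P x = 0 := by rw [← norm_eq_zero, ← hδ, ← h0]
    rw [this, inner_zero_left, mul_zero]
    positivity
  set δ := infDist x M with hδdef
  set a : Mat d k := x - P x with ha
  set b : Mat d k := q - P x with hb
  have key : ∀ s, γ < s → s < 2 * γ → 2 * s * inner ℝ a b ≤ δ * ‖b‖ ^ 2 := by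
    intro s hs1 hs2
    obtain ⟨z, hz1, hz2⟩ := extend_lemma hMcpt hP hprox x hpos (s - δ)
      (by linarith) (by linarith)
    rw [← hδdef] at hz2
    set v : Mat d k := z - x with hv
    have hzP : s ≤ ‖v + a‖ := by
      have h := infDist_le_dist_of_mem (x := z) (hP x).1
      rw [dist_eq_norm, show z - P x = v + a by rw [hv, ha]; abel] at h
      linarith
    have hzq : s ≤ ‖v + a - b‖ := by
      have h := infDist_le_dist_of_mem (x := z) hq
      rw [dist_eq_norm, show z - q = v + a - b by rw [hv, ha, hb]; abel] at h
      linarith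
    have hup : ‖v + a‖ ≤ s := (norm_add_le _ _).trans (by linarith)
    have e1 := norm_add_sq_real v a
    have hs0 : 0 < s := by linarith
    have hva : (s - δ) * δ ≤ inner ℝ v a := by
      have h1 : s ^ 2 ≤ ‖v + a‖ ^ 2 := by gcongr
      have h2 : ‖v‖ ^ 2 ≤ (s - δ) ^ 2 := by gcongr
      rw [← hδ] at e1
      nlinarith
    have hcol : δ • v - (s - δ) • a = 0 := by
      have e2 := norm_sub_sq_real (δ • v) ((s - δ) • a)
      rw [real_inner_smul_left, real_inner_smul_right, norm_smul, norm_smul, ← hδ,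
        Real.norm_of_nonneg hpos.le, Real.norm_of_nonneg (by linarith : 0 ≤ s - δ)] at e2
      have h2 : ‖v‖ ^ 2 ≤ (s - δ) ^ 2 := by gcongr
      have h3 : δ ^ 2 * ‖v‖ ^ 2 ≤ δ ^ 2 * (s - δ) ^ 2 := by gcongr
      have h4 : δ * (s - δ) * ((s - δ) * δ) ≤ δ * (s - δ) * inner ℝ v a :=
        mul_le_mul_of_nonneg_left hva (mul_nonneg hpos.le (by linarith))
      have h5 : ‖δ • v - (s - δ) • a‖ ^ 2 ≤ 0 := by rw [e2]; nlinarith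
      have h6 : ‖δ • v - (s - δ) • a‖ = 0 := by
        apply pow_eq_zero_iff (two_ne_zero) |>.1
        exact le_antisymm h5 (by positivity)
      exact norm_eq_zero.1 h6
    have hcol2 : δ • (v + a) = s • a := by
      have : δ • (v + a) - s • a = δ • v - (s - δ) • a := by module
      rw [hcol] at this
      exact sub_eq_zero.1 this
    have e3 := norm_sub_sq_real (v + a) b
    have h1 : s ^ 2 ≤ ‖v + a - b‖ ^ 2 := by gcongr
    have h2 : ‖v + a‖ ^ 2 ≤ s ^ 2 := by gcongr
    have h3 : 2 * inner ℝ (v + a) b ≤ ‖b‖ ^ 2 := by linarith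
    have h4 : δ * inner ℝ (v + a) b = s * inner ℝ a b := by
      rw [← real_inner_smul_left, hcol2, real_inner_smul_left]
    nlinarith [mul_le_mul_of_nonneg_left h3 hpos.le]
  have hlim : Filter.Tendsto (fun s : ℝ => 2 * s * inner ℝ a b)
      (nhdsWithin (2 * γ) (Set.Iio (2 * γ))) (nhds (2 * (2 * γ) * inner ℝ a b)) := by
    apply Filter.Tendsto.mono_left _ nhdsWithin_le_nhds
    apply Continuous.tendsto (f := fun s : ℝ => 2 * s * inner ℝ a b)
    fun_prop
  have h := le_of_tendsto hlim (b := δ * ‖b‖ ^ 2) (by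
    filter_upwards [Ioo_mem_nhdsLT (show γ < 2 * γ by linarith)] with c hc
    exact key c hc.1 hc.2)
  have h' : δ * ‖b‖ ^ 2 ≤ γ * ‖b‖ ^ 2 := by gcongr
  have : γ * (4 * inner ℝ a b) ≤ γ * ‖b‖ ^ 2 := by linarith
  exact le_of_mul_le_mul_left this hγ

/-- If the compact set `M` is `2γ`-proximally smooth (the projection is single-valued on the
open `2γ`-tube around `M`), then the projection operator `P_M` is `2`-Lipschitz continuous
on the closed `γ`-tube: `‖P_M x - P_M y‖ ≤ 2‖x - y‖` for all `x, y ∈ Ū_M(γ)`. -/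
theorem projection_two_lipschitz_on_tube
    {d k : ℕ} (M : Set (Mat d k)) (hMne : M.Nonempty) (hMcpt : IsCompact M)
    (γ : ℝ) (hγ : 0 < γ)
    (P : Mat d k → Mat d k) (hP : ∀ x, IsNearestPt M x (P x))
    (hprox : ∀ x : Mat d k, infDist x M < 2 * γ → ∀ p, IsNearestPt M x p → p = P x) :
    ∀ x y : Mat d k, infDist x M ≤ γ → infDist y M ≤ γ →
      ‖P x - P y‖ ≤ 2 * ‖x - y‖ := by
  intro x y hx hy
  have h1 := normal_ineq hMcpt hγ hP hprox x hx (P y) (hP y).1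
  have h2 := normal_ineq hMcpt hγ hP hprox y hy (P x) (hP x).1
  have e1 : inner ℝ (x - P x) (P y - P x) = -inner ℝ (x - P x) (P x - P y) := by
    rw [← inner_neg_right, neg_sub]
  have e2 : inner ℝ (x - P x) (P x - P y) - inner ℝ (y - P y) (P x - P y)
      = inner ℝ (x - y) (P x - P y) - ‖P x - P y‖ ^ 2 := by
    rw [← inner_sub_left, ← real_inner_self_eq_norm_sq, ← inner_sub_left]
    congr 1; abel
  have hcs := real_inner_le_norm (x - y) (P x - P y)
  rw [norm_sub_rev (P y), e1] at h1
  have h3 : ‖P x - P y‖ * ‖P x - P y‖ ≤ 2 * ‖x - y‖ * ‖P x - P y‖ := by nlinarith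
  rcases (norm_nonneg (P x - P y)).eq_or_lt with h | h
  · rw [← h]; positivity
  · exact le_of_mul_le_mul_right h3 h
end
end
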